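/- arXiv:math/0701340 — 2 statements merged into one kernel-verified Lean document; each statement's English description precedes it below -/
import Mathlib

section
/- Let Q be a quiver and X ⊆ Q_0 a subset of its vertices. Then every nontrivial path p in Q whose source and target both lie in X admits a unique decomposition p = q_r ⋯ q_1 in which every factor q_i is a cell in Q relative to X (the cellular decomposition of p relative to X). -/
/-!
STATEMENT 0: cellular decomposition.

We model a quiver as a type of vertices, a type of arrows and source/target
maps.  A (nontrivial) path from `x` to `y` is a nonempty list of arrows
`[α₁, …, αₙ]` (in order of traversal) such that consecutive arrows are
composable, the source of `α₁` is `x` and the target of `αₙ` is `y`.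
A *cell* relative to a set of vertices `X` is a nontrivial path whose source
and target lie in `X` and all of whose intermediate vertices lie outside `X`.

The theorem: every nontrivial path whose source and target lie in `X`
decomposes uniquely as a concatenation of cells.
-/

/-- A quiver: vertices, arrows, and source/target maps. -/
structure Qvr where
  V : Type
  E : Type
  src : E → V
  tgt : E → V

namespace Qvr

variable (Q : Qvr)

/-- `l = [α₁, …, αₙ]`, listed in order of traversal, is composable. -/
def IsComposable (l : List Q.E) : Prop :=
  l.Chain' (fun a b => Q.tgt a = Q.src b)

/-- `l` is a nontrivial path from `x` to `y`. -/
def IsPathFrom (l : List Q.E) (x y : Q.V) : Prop :=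
  l ≠ [] ∧ Q.IsComposable l ∧ (Q.src <$> l.head? = some x) ∧ (Q.tgt <$> l.getLast? = some y)

/-- The intermediate vertices of a nontrivial path (the targets of all arrows
except the last one). -/
def inners (l : List Q.E) : List Q.V :=
  l.dropLast.map Q.tgt

/-- A cell in `Q` relative to `X`: a nontrivial path whose source and target
lie in `X` and whose intermediate vertices all lie outside `X`. -/
def IsCell (X : Set Q.V) (l : List Q.E) : Prop :=
  ∃ x ∈ X, ∃ y ∈ X, Q.IsPathFrom l x y ∧ ∀ v ∈ Q.inners l, v ∉ X

end Qvr

/-- Existence, without a condition on the source of the first factor. -/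
theorem cellular_exists_aux (Q : Qvr) (X : Set Q.V) (l : List Q.E) :
    ∀ e : Q.E, Q.IsComposable (e :: l) →
    (∃ y ∈ X, Q.tgt <$> (e :: l).getLast? = some y) →
    ∃ (t : List Q.E) (qs : List (List Q.E)), e :: l = (e :: t) ++ qs.flatten ∧
      (∀ q ∈ qs, Q.IsCell X q) ∧ Q.IsComposable (e :: t) ∧
      (∃ y ∈ X, Q.tgt <$> (e :: t).getLast? = some y) ∧
      ∀ v ∈ Q.inners (e :: t), v ∉ X := by
  induction l with
  | nil =>
    intro e h1 h2
    exact ⟨[], [], by simp, by simp, h1, h2, by simp [Qvr.inners]⟩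
  | cons f l ih =>
    intro e h1 h2
    have h1' : Q.tgt e = Q.src f ∧ Q.IsComposable (f :: l) := 
      List.isChain_cons_cons.1 h1
    obtain ⟨t, qs, ht, hqs, hc, hy, hin⟩ := ih f h1'.2 (by simpa using h2)
    by_cases he : Q.tgt e ∈ X
    · refine ⟨[], (f :: t) :: qs, by simpa using ht, ?_, List.isChain_singleton _,
        ⟨_, he, by simp⟩, by simp [Qvr.inners]⟩
      intro q hq
      rcases List.mem_cons.1 hq with rfl | hq
      · obtain ⟨y, hyX, hy⟩ := hy
        exact ⟨Q.tgt e, he, y, hyX, ⟨by simp, hc, by simp [h1'.1], hy⟩, hin⟩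
      · exact hqs q hq
    · refine ⟨f :: t, qs, by simpa using ht, hqs, ?_, by simpa using hy, ?_⟩
      · exact List.isChain_cons_cons.2 ⟨h1'.1, hc⟩
      · intro v hv
        have hv' : v = Q.tgt e ∨ v ∈ Q.inners (f :: t) := by
          simpa [Qvr.inners] using hv
        rcases hv' with rfl | hv'
        · exact he
        · exact hin v hv'

/-- The shape of a cell: only its last arrow has its target in `X`. -/
theorem cell_shape (Q : Qvr) (X : Set Q.V) (q : List Q.E) (h : Q.IsCell X q) :
    ∃ a e, q = a ++ [e] ∧ Q.tgt e ∈ X ∧ ∀ b ∈ a, Q.tgt b ∉ X := by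
  obtain ⟨x, _, y, hy, ⟨hne, _, _, hl⟩, hin⟩ := h
  rcases List.eq_nil_or_concat q with rfl | ⟨a, e, rfl⟩
  · exact absurd rfl hne
  · refine ⟨a, e, by simp, ?_, ?_⟩
    · have : Q.tgt e = y := by simpa using hl
      exact this ▸ hy
    · intro b hb
      exact hin _ (by simp only [Qvr.inners, List.concat_eq_append, List.dropLast_concat]; exact List.mem_map_of_mem hb)

theorem split_unique {E : Type} (P : E → Prop) (a : List E) :
    ∀ (a' : List E) (e e' : E) (r r' : List E), P e → P e' →
    (∀ b ∈ a, ¬ P b) → (∀ b ∈ a', ¬ P b) → a ++ e :: r = a' ++ e' :: r' →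
    a = a' ∧ e = e' ∧ r = r' := by
  induction a with
  | nil =>
    intro a' e e' r r' he he' ha ha' h
    cases a' with
    | nil => simpa using h
    | cons c a' =>
      simp only [List.nil_append, List.cons_append, List.cons.injEq] at h
      exact absurd (h.1 ▸ he) (ha' c (by simp))
  | cons d a ih =>
    intro a' e e' r r' he he' ha ha' h
    cases a' with
    | nil =>
      simp only [List.nil_append, List.cons_append, List.cons.injEq] at h
      exact absurd (h.1 ▸ he') (ha d (by simp))
    | cons c a' =>
      simp only [List.cons_append, List.cons.injEq] at h
      obtain ⟨h1, h2, h3⟩ := ih a' e e' r r' he he'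
        (fun b hb => ha b (by simp [hb])) (fun b hb => ha' b (by simp [hb])) h.2
      exact ⟨by rw [h.1, h1], h2, h3⟩

theorem cellular_unique_aux (Q : Qvr) (X : Set Q.V) (qs : List (List Q.E)) :
    ∀ qs' : List (List Q.E), (∀ q ∈ qs, Q.IsCell X q) → (∀ q ∈ qs', Q.IsCell X q) →
    qs.flatten = qs'.flatten → qs = qs' := by
  induction qs with
  | nil =>
    intro qs' _ h' h
    cases qs' with
    | nil => rfl
    | cons q qs' =>
      obtain ⟨a, e, rfl, -⟩ := cell_shape Q X q (h' q (by simp))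
      simp at h
  | cons q qs ih =>
    intro qs' h0 h' h
    obtain ⟨a, e, rfl, he, ha⟩ := cell_shape Q X q (h0 q (by simp))
    cases qs' with
    | nil => simp at h
    | cons q' qs' =>
      obtain ⟨a', e', rfl, he', ha'⟩ := cell_shape Q X q' (h' q' (by simp))
      obtain ⟨h1, h2, h3⟩ := split_unique (fun b => Q.tgt b ∈ X) a a' e e'
        qs.flatten qs'.flatten he he' ha ha' (by simpa using h)
      rw [h1, h2, ih qs' (fun q hq => h0 q (by simp [hq])) (fun q hq => h' q (by simp [hq])) h3]

/-- **Cellular decomposition** (unique decomposition of a path with endpoints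
in `X` as a concatenation of cells relative to `X`). -/
theorem cellular_decomposition (Q : Qvr) (X : Set Q.V) (x y : Q.V)
    (hx : x ∈ X) (hy : y ∈ X) (l : List Q.E) (hl : Q.IsPathFrom l x y) :
    ∃! qs : List (List Q.E), qs.flatten = l ∧ ∀ q ∈ qs, Q.IsCell X q := by
  obtain ⟨hne, hc, hs, ht⟩ := hl
  cases l with
  | nil => exact absurd rfl hne
  | cons e l =>
    obtain ⟨t, qs, h1, hqs, hc', ⟨z, hz, hz'⟩, hin⟩ := cellular_exists_aux Q X l e hc ⟨y, hy, ht⟩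
    have hall : ∀ q ∈ (e :: t) :: qs, Q.IsCell X q := by
      intro q hq
      rcases List.mem_cons.1 hq with rfl | hq
      · exact ⟨x, hx, z, hz, ⟨by simp, hc', by simpa using hs, hz'⟩, hin⟩
      · exact hqs q hq
    refine ⟨(e :: t) :: qs, ⟨by simpa using h1.symm, hall⟩, ?_⟩
    rintro qs' ⟨h2, h3⟩
    exact cellular_unique_aux Q X qs' _ h3 hall (by rw [h2, h1]; simp)
end

section
/- Let Q be a quiver and X ⊆ Q_0 a subset of its vertices. Then every path p in Q whose source lies in X and whose target does not lie in X admits a unique decomposition p = t q_r ⋯ q_1 (with r ≥ 0) in which t is a tail in Q relative to X and every q_i is a cell in Q relative to X (the tail decomposition of p relative to X). -/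
namespace Qvr

variable (Q : Qvr)

/-- A tail in `Q` relative to `X`: a nontrivial path whose source lies in `X`
and all of whose other vertices (the targets of all its arrows, in particular
its target) lie outside `X`. -/
def IsTail (X : Set Q.V) (l : List Q.E) : Prop :=
  ∃ x ∈ X, ∃ y, Q.IsPathFrom l x y ∧ ∀ v ∈ l.map Q.tgt, v ∉ X

end Qvr

theorem qvr_split_unique {α : Type} (P : α → Prop) :
    ∀ (m m' : List α) (a a' : α) (r r' : List α), (∀ v ∈ m, ¬ P v) → (∀ v ∈ m', ¬ P v) →
      P a → P a' → m ++ a :: r = m' ++ a' :: r' → m = m' ∧ a = a' ∧ r = r'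
  | [], [], a, a', r, r', _, _, _, _, h => by simpa using h
  | [], b :: m', a, a', r, r', _, h2, h3, _, h => by
      simp only [List.nil_append, List.cons_append, List.cons.injEq] at h
      exact absurd (h.1 ▸ h3) (h2 b (by simp))
  | b :: m, [], a, a', r, r', h1, _, _, h4, h => by
      simp only [List.nil_append, List.cons_append, List.cons.injEq] at h
      exact absurd (h.1 ▸ h4) (h1 b (by simp))
  | b :: m, b' :: m', a, a', r, r', h1, h2, h3, h4, h => by
      simp only [List.cons_append, List.cons.injEq] at h
      have := qvr_split_unique P m m' a a' r r' (fun v hv => h1 v (by simp [hv]))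
        (fun v hv => h2 v (by simp [hv])) h3 h4 h.2
      exact ⟨by rw [h.1, this.1], this.2⟩

theorem qvr_split_exists {α : Type} (P : α → Prop) (l : List α) :
    (∀ v ∈ l, ¬ P v) ∨ ∃ m a r, l = m ++ a :: r ∧ (∀ v ∈ m, ¬ P v) ∧ P a := by
  induction l with
  | nil => left; simp
  | cons b l ih =>
    by_cases hb : P b
    · exact Or.inr ⟨[], b, l, by simp, by simp, hb⟩
    · rcases ih with h | ⟨m, a, r, h, hm, ha⟩
      · left; simpa [hb] using h
      · right
        refine ⟨b :: m, a, r, by simp [h], ?_, ha⟩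
        simpa [hb] using hm

theorem Qvr.IsCell.split {Q : Qvr} {X : Set Q.V} {q : List Q.E} (h : Q.IsCell X q) :
    ∃ m a, q = m ++ [a] ∧ (∀ v ∈ m, ¬ Q.tgt v ∈ X) ∧ Q.tgt a ∈ X := by
  obtain ⟨x, _, y, hy, ⟨hne, _, _, hl⟩, hi⟩ := h
  rcases List.eq_nil_or_concat q with rfl | ⟨m, a, rfl⟩
  · exact absurd rfl hne
  · refine ⟨m, a, by simp, ?_, ?_⟩
    · simpa [Qvr.inners] using hi
    · have : Q.tgt a = y := by simpa using hl
      rwa [this]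

theorem Qvr.tail_unique (Q : Qvr) (X : Set Q.V) :
    ∀ (qs qs' : List (List Q.E)) (t t' : List Q.E),
      (∀ q ∈ qs, Q.IsCell X q) → (∀ q ∈ qs', Q.IsCell X q) →
      (∀ v ∈ t, ¬ Q.tgt v ∈ X) → (∀ v ∈ t', ¬ Q.tgt v ∈ X) →
      qs.flatten ++ t = qs'.flatten ++ t' → qs = qs' ∧ t = t'
  | [], [], t, t', _, _, _, _, h => by simpa using h
  | [], q :: qs, t, t', _, h2, h3, _, h => by
      obtain ⟨m, a, rfl, _, ha⟩ := (h2 q (by simp)).split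
      simp only [List.flatten_nil, List.nil_append] at h
      exact absurd ha (h3 a (by rw [h]; simp))
  | q :: qs, [], t, t', h1, _, _, h4, h => by
      obtain ⟨m, a, rfl, _, ha⟩ := (h1 q (by simp)).split
      simp only [List.flatten_nil, List.nil_append] at h
      exact absurd ha (h4 a (by rw [← h]; simp))
  | q :: qs, q' :: qs', t, t', h1, h2, h3, h4, h => by
      obtain ⟨m, a, hq, hm, ha⟩ := (h1 q (by simp)).split
      obtain ⟨m', a', hq', hm', ha'⟩ := (h2 q' (by simp)).split
      have := qvr_split_unique (fun v => Q.tgt v ∈ X) m m' a a' (qs.flatten ++ t)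
        (qs'.flatten ++ t') hm hm' ha ha' (by simpa [hq, hq'] using h)
      have ih := Qvr.tail_unique Q X qs qs' t t' (fun v hv => h1 v (by simp [hv]))
        (fun v hv => h2 v (by simp [hv])) h3 h4 this.2.2
      exact ⟨by rw [hq, hq', this.1, this.2.1, ih.1], ih.2⟩

theorem Qvr.tail_exists (Q : Qvr) (X : Set Q.V) (y : Q.V) (hy : y ∉ X) (n : ℕ) :
    ∀ (x : Q.V) (l : List Q.E), l.length ≤ n → x ∈ X → Q.IsPathFrom l x y →
      ∃ d : List (List Q.E) × List Q.E,
        d.1.flatten ++ d.2 = l ∧ (∀ q ∈ d.1, Q.IsCell X q) ∧ Q.IsTail X d.2 := by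
  induction n with
  | zero =>
    intro x l hn _ hl
    exact absurd (List.length_eq_zero_iff.mp (by omega)) hl.1
  | succ n ih =>
    intro x l hn hx hl
    rcases qvr_split_exists (fun v => Q.tgt v ∈ X) l with h | ⟨m, a, r, rfl, hm, ha⟩
    · exact ⟨([], l), by simp, by simp, x, hx, y, hl, by simpa using h⟩
    · obtain ⟨_, hc, hs, ht⟩ := hl
      have hr : r ≠ [] := by
        rintro rfl
        have : Q.tgt a = y := by simpa using ht
        exact hy (this ▸ ha)
      obtain ⟨b, r, rfl⟩ := List.exists_cons_of_ne_nil hr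
      have hc' : List.IsChain (fun a b => Q.tgt a = Q.src b) ((m ++ [a]) ++ (b :: r)) := by
        rw [List.append_assoc]
        exact hc
      obtain ⟨c1, c2, c3⟩ := List.isChain_append.mp hc'
      have hab : Q.tgt a = Q.src b := by simpa using c3
      obtain ⟨⟨qs, t⟩, e, hq, htl⟩ := ih (Q.tgt a) (b :: r)
        (by simp at hn ⊢; omega) ha
        ⟨by simp, c2, by simp [hab], by
          rw [List.getLast?_append_of_ne_nil _ (by simp), List.getLast?_cons_cons] at ht
          exact ht⟩
      refine ⟨((m ++ [a]) :: qs, t), ?_, ?_, htl⟩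
      · simp only [List.flatten_cons, List.append_assoc] at e ⊢
        rw [e]; simp
      · intro q hqm
        rcases List.mem_cons.mp hqm with rfl | hqm
        · refine ⟨x, hx, Q.tgt a, ha, ⟨by simp, c1, ?_, by simp⟩, ?_⟩
          · cases m <;> simpa using hs
          · simpa [Qvr.inners] using hm
        · exact hq q hqm

/-- **Tail decomposition** (unique decomposition of a path starting in `X` and
ending outside `X` as a concatenation of cells relative to `X` followed by a
tail relative to `X`).  The decomposition is recorded as a pair
`(qs, t) = ([q_1, …, q_r], t)` with `p = t q_r ⋯ q_1`, i.e. the arrow list of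
`p` is the flattening of `qs` followed by `t`. -/
theorem tail_decomposition (Q : Qvr) (X : Set Q.V) (x y : Q.V)
    (hx : x ∈ X) (hy : y ∉ X) (l : List Q.E) (hl : Q.IsPathFrom l x y) :
    ∃! d : List (List Q.E) × List Q.E,
      d.1.flatten ++ d.2 = l ∧ (∀ q ∈ d.1, Q.IsCell X q) ∧ Q.IsTail X d.2 := by
  obtain ⟨d, h1, h2, h3⟩ := Qvr.tail_exists Q X y hy l.length x l le_rfl hx hl
  refine ⟨d, ⟨h1, h2, h3⟩, ?_⟩
  rintro d' ⟨h1', h2', h3'⟩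
  obtain ⟨_, _, _, _, h3⟩ := h3
  obtain ⟨_, _, _, _, h3'⟩ := h3'
  have := Qvr.tail_unique Q X d'.1 d.1 d'.2 d.2 h2' h2 (by simpa using h3') (by simpa using h3)
    (h1'.trans h1.symm)
  exact Prod.ext this.1 this.2
end
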